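/- arXiv:1801.07305 — 2 statements merged into one kernel-verified Lean document; each statement's English description precedes it below -/
import Mathlib

section
/- Let R ⊂ A be a Frobenius extension of rings and let M be a left A-module. If the underlying left R-module M (via restriction of scalars) is Gorenstein projective, then the left A-modules A ⊗_R M and Hom_R(A, M) are Gorenstein projective. -/
universe u

section Frobenius

variable {R A : Type u} [Ring R] [Ring A]

/-- A ring extension `ι : R →+* A` (an injective ring homomorphism) is a Frobenius extension
if there is an `R`-`R`-bimodule homomorphism `τ : A → R` together with dual bases
`x i`, `y i` in `A`. -/
def IsFrobeniusExtension (ι : R →+* A) : Prop :=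
  Function.Injective ι ∧
  ∃ (τ : A →+ R) (n : ℕ) (x y : Fin n → A),
    (∀ (r : R) (a : A), τ (ι r * a) = r * τ a) ∧
    (∀ (a : A) (r : R), τ (a * ι r) = τ a * r) ∧
    (∀ a : A, ∑ i, x i * ι (τ (y i * a)) = a) ∧
    (∀ a : A, ∑ i, ι (τ (a * x i)) * y i = a)

/-- The extension of scalars `A ⊗_R N` of a left `R`-module `N` along `ι : R →+* A`,
realized as the quotient of the free left `A`-module on `N` by the bilinearity and
balancing relations.  It is a left `A`-module. -/
abbrev ExtendedTensor (ι : R →+* A) (N : Type u) [AddCommGroup N] [Module R N] : Type u :=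
  (N →₀ A) ⧸ Submodule.span A
    ({x : N →₀ A | ∃ n n' : N,
        x = Finsupp.single (n + n') 1 - Finsupp.single n 1 - Finsupp.single n' 1} ∪
     {x : N →₀ A | ∃ (r : R) (n : N),
        x = Finsupp.single (r • n) 1 - Finsupp.single n (ι r)})

/-- The coinduced module `Hom_R(A, N)` of a left `R`-module `N` along `ι : R →+* A`,
where `A` is a left `R`-module via `ι`.  It is a left `A`-module via `(a • f) b = f (b * a)`. -/
abbrev CoinducedModule (ι : R →+* A) (N : Type u) [AddCommGroup N] [Module R N] : Type u :=
  @LinearMap R R _ _ (RingHom.id R) A N _ _ (Module.compHom A ι) _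

noncomputable instance CoinducedModule.instModule (ι : R →+* A) (N : Type u)
    [AddCommGroup N] [Module R N] : Module A (CoinducedModule ι N) :=
  letI : Module R A := Module.compHom A ι
  { smul := fun a f =>
      { toFun := fun b => f (b * a)
        map_add' := fun b c => by
          show f ((b + c) * a) = f (b * a) + f (c * a)
          rw [add_mul]; exact map_add f _ _
        map_smul' := fun r b => by
          show f (ι r * b * a) = r • f (b * a)
          rw [mul_assoc]
          exact map_smul f r (b * a) }
    one_smul := fun f => LinearMap.ext fun b => by show f (b * 1) = f b; rw [mul_one]
    mul_smul := fun a a' f => LinearMap.ext fun b => by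
      show f (b * (a * a')) = f (b * a * a')
      rw [mul_assoc]
    smul_zero := fun a => LinearMap.ext fun b => rfl
    smul_add := fun a f g => LinearMap.ext fun b => rfl
    add_smul := fun a a' f => LinearMap.ext fun b => by
      show f (b * (a + a')) = f (b * a) + f (b * a')
      rw [mul_add, map_add]
    zero_smul := fun f => LinearMap.ext fun b => by show f (b * 0) = 0; rw [mul_zero, map_zero] }

end Frobenius

/-- A left `R`-module `M` is Gorenstein projective if it is a syzygy of a totally acyclic
complex of projective modules: there is an acyclic complex `⋯ → P₁ → P₀ → P₋₁ → ⋯` of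
projective `R`-modules which stays acyclic after applying `Hom_R(-, Q)` for every
projective `R`-module `Q`, with `M ≅ ker (P₀ → P₋₁)`. -/
def IsGorensteinProjective (R : Type u) [Ring R] (M : ModuleCat.{u} R) : Prop :=
  ∃ (P : ℤ → ModuleCat.{u} R) (f : ∀ i : ℤ, P (i + 1) →ₗ[R] P i),
    (∀ i, Module.Projective R (P i)) ∧
    (∀ i, (f i).comp (f (i + 1)) = 0) ∧
    (∀ i, LinearMap.range (f (i + 1)) = LinearMap.ker (f i)) ∧
    (∀ Q : ModuleCat.{u} R, Module.Projective R Q →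
      ∀ (i : ℤ) (g : P (i + 1) →ₗ[R] Q), g.comp (f (i + 1)) = 0 →
        ∃ h : P i →ₗ[R] Q, h.comp (f i) = g) ∧
    Nonempty (↥M ≃ₗ[R] ↥(LinearMap.ker (f (-1))))

/-!
A Frobenius system turns `a ⊗ n ↦ (b ↦ τ (b * a) • n)` into an isomorphism
`A ⊗_R N ≅ Hom_R(A, N)`, natural in `N`, so it is enough to treat `A ⊗_R N`. The dual bases exhibit
`A` as a finitely generated projective left `R`-module. Hence `Hom_R(A, -) ≅ A ⊗_R -` is exact, and
projective `A`-modules `Q` restrict to projective `R`-modules. Since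
`Hom_A(A ⊗_R P, Q) = Hom_R(P, Q)`, the functor `A ⊗_R -` preserves projectives and takes a totally
acyclic complex with syzygy `N` to one with syzygy `A ⊗_R N`.
-/

section Semilinear

theorem projective_trans (R A Q : Type*) [Semiring R] [Semiring A] [AddCommMonoid Q]
    [Module R A] [Module A Q] [Module R Q] [IsScalarTower R A A] [IsScalarTower R A Q]
    [Module.Projective R A] [Module.Projective A Q] : Module.Projective R Q := by
  classical
  obtain ⟨s, hs⟩ := Module.projective_def'.1 (inferInstance : Module.Projective A Q)
  have : Module.Projective R (Q →₀ A) := .of_equiv (finsuppLequivDFinsupp R).symm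
  exact .of_split (s.restrictScalars R)
    ((Finsupp.linearCombination A (id : Q → Q)).restrictScalars R)
    (LinearMap.ext fun q => LinearMap.congr_fun hs q)

variable {R A : Type*} [Ring R] [Ring A] {ι : R →+* A}

theorem projective_compHom {Q : Type*} [AddCommMonoid Q] [Module A Q]
    (hA : @Module.Projective R _ A _ (Module.compHom A ι)) [Module.Projective A Q] :
    @Module.Projective R _ Q _ (Module.compHom Q ι) :=
  letI := Module.compHom A ι
  letI := Module.compHom Q ι
  haveI := hA
  haveI : IsScalarTower R A A := ⟨fun r => mul_assoc (ι r)⟩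
  haveI : IsScalarTower R A Q := ⟨fun r => mul_smul (ι r)⟩
  projective_trans R A Q

theorem exists_semilinearMap_lift {P X Y : Type*} [AddCommMonoid P] [Module R P]
    [Module.Projective R P] [AddCommMonoid X] [Module A X] [AddCommMonoid Y] [Module A Y]
    (p : X →ₗ[A] Y) (hp : Function.Surjective p) (g : P →ₛₗ[ι] Y) :
    ∃ h : P →ₛₗ[ι] X, p.comp h = g := by
  let := Module.compHom X ι
  let := Module.compHom Y ι
  let pR : X →ₗ[R] Y := { p with map_smul' := fun r => p.map_smul (ι r) }
  let gR : P →ₗ[R] Y := { g with map_smul' := g.map_smul' }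
  obtain ⟨h, hh⟩ := Module.projective_lifting_property pR gR hp
  exact ⟨{ h with map_smul' := h.map_smul' }, LinearMap.ext fun m => LinearMap.congr_fun hh m⟩

end Semilinear

section TotallyAcyclic

variable {R : Type u} [Ring R] {M N : Type u} [AddCommGroup M] [Module R M] [AddCommGroup N]
  [Module R N]

/-- Totally acyclic complexes of projective `R`-modules, those whose syzygies are the Gorenstein
projective modules. Acyclicity of `Hom_R(-, Q)` at `P (i + 1)` says that maps into `Q` killing the
incoming differential extend along the outgoing one. -/
structure IsTotallyAcyclic (R : Type u) [Ring R] (P : ℤ → Type u) [∀ i, AddCommGroup (P i)]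
    [∀ i, Module R (P i)] (d : ∀ i, P (i + 1) →ₗ[R] P i) : Prop where
  projective : ∀ i, Module.Projective R (P i)
  exact : ∀ i, Function.Exact (d (i + 1)) (d i)
  exists_extension : ∀ {Q : Type u} [AddCommGroup Q] [Module R Q], Module.Projective R Q →
    ∀ {i : ℤ} (g : P (i + 1) →ₗ[R] Q), g.comp (d (i + 1)) = 0 → ∃ h : P i →ₗ[R] Q, h.comp (d i) = g

theorem isGorensteinProjective_iff :
    IsGorensteinProjective R (ModuleCat.of R N) ↔
      ∃ (P : ℤ → ModuleCat.{u} R) (d : ∀ i, P (i + 1) →ₗ[R] P i) (j : N →ₗ[R] P (-1 + 1)),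
        IsTotallyAcyclic R (fun i => P i) d ∧ Function.Injective j ∧ Function.Exact j (d (-1)) := by
  constructor
  · rintro ⟨P, d, hP, -, hexact, hhom, ⟨e⟩⟩
    refine ⟨P, d, (LinearMap.ker (d (-1))).subtype.comp e.toLinearMap,
      ⟨hP, fun i => LinearMap.exact_iff.2 (hexact i).symm, fun {Q} _ _ hQ => hhom (.of R Q) hQ _⟩,
      Subtype.val_injective.comp e.injective, LinearMap.exact_iff.2 ?_⟩
    rw [LinearMap.range_comp, LinearEquiv.range, Submodule.map_top, Submodule.range_subtype]
  · rintro ⟨P, d, j, hd, hj, hjd⟩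
    exact ⟨P, d, hd.projective, fun i => (hd.exact i).linearMap_comp_eq_zero,
      fun i => (hd.exact i).linearMap_ker_eq.symm, fun Q hQ i g => hd.exists_extension hQ g,
      ⟨(LinearEquiv.ofInjective j hj).trans (LinearEquiv.ofEq _ _ hjd.linearMap_ker_eq.symm)⟩⟩

theorem IsGorensteinProjective.of_linearEquiv (e : M ≃ₗ[R] N)
    (h : IsGorensteinProjective R (ModuleCat.of R M)) :
    IsGorensteinProjective R (ModuleCat.of R N) := by
  obtain ⟨P, d, hP, hcomp, hexact, hhom, ⟨k⟩⟩ := h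
  exact ⟨P, d, hP, hcomp, hexact, hhom, ⟨e.symm.trans k⟩⟩

theorem IsTotallyAcyclic.exists_semilinearMap_extension {A : Type u} [Ring A] {ι : R →+* A}
    (hA : @Module.Projective R _ A _ (Module.compHom A ι))
    {P : ℤ → Type u} [∀ i, AddCommGroup (P i)] [∀ i, Module R (P i)]
    {d : ∀ i, P (i + 1) →ₗ[R] P i} (hd : IsTotallyAcyclic R P d)
    {Q : Type u} [AddCommGroup Q] [Module A Q] (hQ : Module.Projective A Q) {i : ℤ}
    (g : P (i + 1) →ₛₗ[ι] Q) (hg : g.comp (d (i + 1)) = 0) :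
    ∃ h : P i →ₛₗ[ι] Q, h.comp (d i) = g := by
  let := Module.compHom Q ι
  let gR : P (i + 1) →ₗ[R] Q := { g with map_smul' := g.map_smul' }
  obtain ⟨h, hh⟩ := hd.exists_extension (projective_compHom hA) gR
    (LinearMap.ext fun m => LinearMap.congr_fun hg m)
  exact ⟨{ h with map_smul' := h.map_smul' }, LinearMap.ext fun m => LinearMap.congr_fun hh m⟩

end TotallyAcyclic

section FrobeniusExtension

variable {R A : Type u} [Ring R] [Ring A] (ι : R →+* A)
  {N N' N'' : Type u} [AddCommGroup N] [Module R N] [AddCommGroup N'] [Module R N']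
  [AddCommGroup N''] [Module R N'']

namespace ExtendedTensor

variable (N) in
/-- The canonical map `n ↦ 1 ⊗ n`. Semilinear maps along `ι` stand for `R`-linear maps into the
restriction of scalars. -/
noncomputable def mk : N →ₛₗ[ι] ExtendedTensor ι N where
  toFun n := Submodule.Quotient.mk (Finsupp.single n 1)
  map_add' n n' := by
    refine (Submodule.Quotient.eq _).2 (Submodule.subset_span (.inl ⟨n, n', ?_⟩))
    module
  map_smul' r n := by
    refine (Submodule.Quotient.eq _).2 (Submodule.subset_span (.inr ⟨r, n, ?_⟩))
    simp

variable {ι}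

theorem induction_on {p : ExtendedTensor ι N → Prop} (t : ExtendedTensor ι N) (zero : p 0)
    (smul_mk : ∀ (a : A) (n : N), p (a • mk ι N n)) (add : ∀ t t', p t → p t' → p (t + t')) :
    p t := by
  induction t using Submodule.Quotient.induction_on with
  | H z =>
    induction z using Finsupp.induction_linear with
    | zero => exact zero
    | add z z' hz hz' => exact add _ _ hz hz'
    | single n a =>
      rw [← mul_one a, ← smul_eq_mul, ← Finsupp.smul_single]
      exact smul_mk a n

section lift

variable {Q : Type*} [AddCommGroup Q] [Module A Q]

theorem hom_ext {g h : ExtendedTensor ι N →ₗ[A] Q} (H : ∀ n, g (mk ι N n) = h (mk ι N n)) :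
    g = h := LinearMap.ext fun t => by
  induction t using ExtendedTensor.induction_on with
  | zero => rw [map_zero, map_zero]
  | smul_mk a n => rw [map_smul, map_smul, H]
  | add t t' ht ht' => rw [map_add, map_add, ht, ht']

/-- The universal property of extension of scalars: `a ⊗ n ↦ a • g n`. -/
noncomputable def lift (g : N →ₛₗ[ι] Q) : ExtendedTensor ι N →ₗ[A] Q :=
  Submodule.liftQ _ (Finsupp.linearCombination A g) <| Submodule.span_le.2 <| by
    rintro _ (⟨n, n', rfl⟩ | ⟨r, n, rfl⟩) <;> simp

@[simp]
theorem lift_mk (g : N →ₛₗ[ι] Q) (n : N) : lift g (mk ι N n) = g n :=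
  (Finsupp.linearCombination_single A 1 n).trans (one_smul A (g n))

end lift

variable (ι) in
/-- Functoriality of extension of scalars, `a ⊗ n ↦ a ⊗ f n`. -/
noncomputable def map (f : N →ₗ[R] N') : ExtendedTensor ι N →ₗ[A] ExtendedTensor ι N' :=
  lift ((mk ι N').comp f)

@[simp]
theorem map_mk (f : N →ₗ[R] N') (n : N) : map ι f (mk ι N n) = mk ι N' (f n) :=
  lift_mk _ n

theorem projective [Module.Projective R N] : Module.Projective A (ExtendedTensor ι N) :=
  .of_lifting_property'' fun p hp => by
    obtain ⟨h, hh⟩ := exists_semilinearMap_lift p hp (mk ι N)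
    refine ⟨lift h, hom_ext fun n => ?_⟩
    rw [LinearMap.comp_apply, lift_mk]
    exact LinearMap.congr_fun hh n

end ExtendedTensor

namespace CoinducedModule

variable {ι}

theorem apply_ringHom_mul (φ : CoinducedModule ι N) (r : R) (a : A) : φ (ι r * a) = r • φ a :=
  letI := Module.compHom A ι
  φ.map_smul' r a

theorem smul_apply (a b : A) (φ : CoinducedModule ι N) : (a • φ) b = φ (b * a) :=
  rfl

variable (ι) in
/-- Functoriality of coinduction, by postcomposition. -/
noncomputable def map (f : N →ₗ[R] N') : CoinducedModule ι N →ₗ[A] CoinducedModule ι N' where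
  toFun φ := letI := Module.compHom A ι; f.comp φ
  map_add' φ ψ := DFunLike.ext _ _ fun b => map_add f (φ b) (ψ b)
  map_smul' _ _ := rfl

@[simp]
theorem map_apply (f : N →ₗ[R] N') (φ : CoinducedModule ι N) (b : A) : map ι f φ b = f (φ b) :=
  rfl

theorem map_injective {f : N →ₗ[R] N'} (hf : Function.Injective f) :
    Function.Injective (map ι f) := fun _ _ h =>
  DFunLike.ext _ _ fun b => hf (DFunLike.congr_fun h b)

theorem map_exact (hA : @Module.Projective R _ A _ (Module.compHom A ι)) {f : N →ₗ[R] N'}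
    {g : N' →ₗ[R] N''} (hfg : Function.Exact f g) : Function.Exact (map ι f) (map ι g) := by
  let := Module.compHom A ι
  intro φ
  constructor
  · intro hφ
    have hφ_range (b : A) : φ b ∈ LinearMap.range f := (hfg _).1 (DFunLike.congr_fun hφ b)
    obtain ⟨ψ, hψ⟩ := Module.projective_lifting_property f.rangeRestrict
      (φ.codRestrict _ hφ_range) f.surjective_rangeRestrict
    exact ⟨ψ, LinearMap.ext fun b => congrArg Subtype.val (LinearMap.congr_fun hψ b)⟩
  · rintro ⟨ψ, rfl⟩
    exact LinearMap.ext fun b => hfg.apply_apply_eq_zero (ψ b)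

end CoinducedModule

variable {ι}

/-- A Frobenius system of `ι`: the bimodule map `τ : A → R`, whose left linearity is encoded by
`τ ∈ Hom_R(A, R)`, together with dual bases `x`, `y` indexed by a finite type. -/
structure FrobeniusSystem (ι : R →+* A) (κ : Type*) [Fintype κ] where
  τ : CoinducedModule ι R
  x : κ → A
  y : κ → A
  τ_mul : ∀ (a : A) (r : R), τ (a * ι r) = τ a * r
  sum_x : ∀ a : A, ∑ i, x i * ι (τ (y i * a)) = a
  sum_y : ∀ a : A, ∑ i, ι (τ (a * x i)) * y i = a

theorem IsFrobeniusExtension.exists_frobeniusSystem (h : IsFrobeniusExtension ι) :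
    ∃ n : ℕ, Nonempty (FrobeniusSystem ι (Fin n)) := by
  obtain ⟨-, τ, n, x, y, τ_left, τ_right, sum_x, sum_y⟩ := h
  let := Module.compHom A ι
  exact ⟨n, ⟨⟨{ τ with map_smul' := τ_left }, x, y, τ_right, sum_x, sum_y⟩⟩⟩

namespace FrobeniusSystem

variable {κ : Type*} [Fintype κ]

theorem projective (D : FrobeniusSystem ι κ) :
    @Module.Projective R _ A _ (Module.compHom A ι) :=
  letI := Module.compHom A ι
  .of_split (LinearMap.pi fun i => D.x i • D.τ) (Fintype.linearCombination R D.y)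
    (LinearMap.ext D.sum_y)

section FrobeniusIsomorphism

variable (D : FrobeniusSystem ι κ)

variable (N) in
/-- The `R`-linear map `N → Hom_R(A, N)` sending `n` to `b ↦ τ b • n`, which corresponds to
`n ↦ 1 ⊗ n` under the Frobenius isomorphism. -/
noncomputable def toCoinduced : N →ₛₗ[ι] CoinducedModule ι N where
  toFun n := CoinducedModule.map ι (LinearMap.toSpanSingleton R N n) D.τ
  map_add' n n' := DFunLike.ext _ _ fun b => smul_add (D.τ b) n n'
  map_smul' r n := DFunLike.ext _ _ fun b => by
    change D.τ b • r • n = D.τ (b * ι r) • n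
    rw [D.τ_mul, mul_smul]

theorem toCoinduced_apply (n : N) (b : A) : D.toCoinduced N n b = D.τ b • n :=
  rfl

theorem sum_smul_toCoinduced (φ : CoinducedModule ι N) :
    ∑ i, D.x i • D.toCoinduced N (φ (D.y i)) = φ := by
  let := Module.compHom A ι
  refine LinearMap.ext fun b => ?_
  calc (∑ i, D.x i • D.toCoinduced N (φ (D.y i))) b
      = ∑ i, D.τ (b * D.x i) • φ (D.y i) := LinearMap.sum_apply _ _ b
    _ = φ (∑ i, ι (D.τ (b * D.x i)) * D.y i) := by
      simp only [map_sum, CoinducedModule.apply_ringHom_mul]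
    _ = φ b := by rw [D.sum_y]

theorem sum_smul_mk (a : A) (n : N) :
    ∑ i, D.x i • ExtendedTensor.mk ι N ((a • D.toCoinduced N n) (D.y i)) =
      a • ExtendedTensor.mk ι N n := by
  simp only [CoinducedModule.smul_apply, toCoinduced_apply, map_smulₛₗ, smul_smul]
  rw [← Finset.sum_smul, D.sum_x]

variable (N) in
/-- The Frobenius isomorphism `A ⊗_R N ≅ Hom_R(A, N)`, sending `a ⊗ n` to `b ↦ τ (b * a) • n`. -/
noncomputable def tensorEquivCoinduced : ExtendedTensor ι N ≃ₗ[A] CoinducedModule ι N where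
  __ := ExtendedTensor.lift (D.toCoinduced N)
  invFun φ := ∑ i, D.x i • ExtendedTensor.mk ι N (φ (D.y i))
  left_inv t := by
    change ∑ i, D.x i • ExtendedTensor.mk ι N (ExtendedTensor.lift (D.toCoinduced N) t (D.y i)) = t
    induction t using ExtendedTensor.induction_on with
    | zero => simp
    | smul_mk a n => rw [map_smul, ExtendedTensor.lift_mk, D.sum_smul_mk]
    | add t t' ht ht' =>
      simp only [map_add, LinearMap.add_apply, smul_add, Finset.sum_add_distrib, ht, ht']
  right_inv φ := by
    change ExtendedTensor.lift (D.toCoinduced N)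
      (∑ i, D.x i • ExtendedTensor.mk ι N (φ (D.y i))) = φ
    simp only [map_sum, map_smul, ExtendedTensor.lift_mk, D.sum_smul_toCoinduced]

theorem tensorEquivCoinduced_mk (n : N) :
    D.tensorEquivCoinduced N (ExtendedTensor.mk ι N n) = D.toCoinduced N n :=
  ExtendedTensor.lift_mk _ n

theorem tensorEquivCoinduced_naturality (f : N →ₗ[R] N') :
    (CoinducedModule.map ι f).comp (D.tensorEquivCoinduced N).toLinearMap =
      (D.tensorEquivCoinduced N').toLinearMap.comp (ExtendedTensor.map ι f) :=
  ExtendedTensor.hom_ext fun n => DFunLike.ext _ _ fun b => by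
    simp only [LinearMap.comp_apply, LinearEquiv.coe_coe, ExtendedTensor.map_mk,
      tensorEquivCoinduced_mk, CoinducedModule.map_apply, toCoinduced_apply, map_smul]

end FrobeniusIsomorphism

theorem extendedTensor_map_injective (D : FrobeniusSystem ι κ) {f : N →ₗ[R] N'}
    (hf : Function.Injective f) : Function.Injective (ExtendedTensor.map ι f) := by
  refine Function.Injective.of_comp (f := D.tensorEquivCoinduced N') ?_
  rw [← LinearEquiv.coe_toLinearMap, ← LinearMap.coe_comp, ← D.tensorEquivCoinduced_naturality]
  exact (CoinducedModule.map_injective hf).comp (D.tensorEquivCoinduced N).injective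

theorem extendedTensor_map_exact (D : FrobeniusSystem ι κ) {f : N →ₗ[R] N'}
    {g : N' →ₗ[R] N''} (hfg : Function.Exact f g) :
    Function.Exact (ExtendedTensor.map ι f) (ExtendedTensor.map ι g) :=
  (Function.Exact.iff_of_ladder_linearEquiv (D.tensorEquivCoinduced_naturality f)
    (D.tensorEquivCoinduced_naturality g)).1 (CoinducedModule.map_exact D.projective hfg)

theorem isTotallyAcyclic_extendedTensor_map (D : FrobeniusSystem ι κ) {P : ℤ → Type u}
    [∀ i, AddCommGroup (P i)] [∀ i, Module R (P i)] {d : ∀ i, P (i + 1) →ₗ[R] P i}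
    (hd : IsTotallyAcyclic R P d) :
    IsTotallyAcyclic A (fun i => ExtendedTensor ι (P i)) fun i => ExtendedTensor.map ι (d i) where
  projective i :=
    haveI := hd.projective i
    ExtendedTensor.projective
  exact i := D.extendedTensor_map_exact (hd.exact i)
  exists_extension {Q} _ _ hQ i g hg := by
    obtain ⟨h, hh⟩ := hd.exists_semilinearMap_extension D.projective hQ
      (g.comp (ExtendedTensor.mk ι (P (i + 1)))) <| LinearMap.ext fun n => by
        simpa using LinearMap.congr_fun hg (ExtendedTensor.mk ι _ n)
    refine ⟨ExtendedTensor.lift h, ExtendedTensor.hom_ext fun n => ?_⟩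
    simpa using LinearMap.congr_fun hh n

theorem isGorensteinProjective_extendedTensor (D : FrobeniusSystem ι κ)
    (hN : IsGorensteinProjective R (ModuleCat.of R N)) :
    IsGorensteinProjective A (ModuleCat.of A (ExtendedTensor ι N)) := by
  obtain ⟨P, d, j, hd, hj, hjd⟩ := isGorensteinProjective_iff.1 hN
  exact isGorensteinProjective_iff.2 ⟨fun i => .of A (ExtendedTensor ι (P i)),
    fun i => ExtendedTensor.map ι (d i), ExtendedTensor.map ι j,
    D.isTotallyAcyclic_extendedTensor_map hd, D.extendedTensor_map_injective hj,
    D.extendedTensor_map_exact hjd⟩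

end FrobeniusSystem

theorem stmt2_general {κ : Type*} [Fintype κ] (D : FrobeniusSystem ι κ)
    (hN : IsGorensteinProjective R (ModuleCat.of R N)) :
    IsGorensteinProjective A (ModuleCat.of A (ExtendedTensor ι N)) ∧
      IsGorensteinProjective A (ModuleCat.of A (CoinducedModule ι N)) :=
  have h := D.isGorensteinProjective_extendedTensor hN
  ⟨h, h.of_linearEquiv (D.tensorEquivCoinduced N)⟩

end FrobeniusExtension

section Statement

variable {R A : Type u} [Ring R] [Ring A]

theorem stmt2 (ι : R →+* A) (hF : IsFrobeniusExtension ι)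
    (M : Type u) [AddCommGroup M] [Module A M]
    (hM : IsGorensteinProjective R (@ModuleCat.of R _ M _ (Module.compHom M ι))) :
    IsGorensteinProjective A
        (ModuleCat.of A (@ExtendedTensor R A _ _ ι M _ (Module.compHom M ι))) ∧
      IsGorensteinProjective A
        (ModuleCat.of A (@CoinducedModule R A _ _ ι M _ (Module.compHom M ι))) := by
  obtain ⟨_, ⟨D⟩⟩ := hF.exists_frobeniusSystem
  let := Module.compHom M ι
  exact stmt2_general D hM

end Statement
end

section
/- Let R ⊂ A be a Frobenius extension of rings and let M be a left A-module. If the left A-modules A ⊗_R M and Hom_R(A, M) are both Gorenstein projective, then M is a Gorenstein projective left A-module. -/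
universe u

/-!
Write `F` for restriction of scalars and `G = Hom_R(A, -)`. The Frobenius form makes `G` left
adjoint to `F` as well as right adjoint, so both functors are exact, preserve projective objects
and therefore preserve Gorenstein projective objects. Since `G (F M)` is Gorenstein projective, so
is `F (G (F M))`, and hence its retract `F M`.

Conversely let `F M` be Gorenstein projective. The orthogonality of `M` to a projective `Q` follows
from the adjunction, because `Q` is a retract of `G (F Q)`. Embedding `M` in `G (F M)` and then
`G (F M)` in a projective object `P`, the cokernel of `M → P` is after restriction an extension of
the Gorenstein projective objects `F (G (F M)) / F M` and `F (P / G (F M))`. Thus the class of all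
`M` with `F M` Gorenstein projective is closed under forming projective coresolutions, so its
members are Gorenstein projective.
-/

open CategoryTheory CategoryTheory.Abelian CategoryTheory.Limits

universe w w' v₁ u₁ v₂ u₂

section ExtVanishing

variable {C : Type u₁} [Category.{v₁} C] [Abelian C] [HasExt.{w} C] {X Y N N' : C} {n : ℕ}
  {S : ShortComplex C}

lemma ext_subsingleton_of_retract (r : Retract X Y) [Subsingleton (Ext.{w} Y N n)] :
    Subsingleton (Ext.{w} X N n) :=
  subsingleton_of_forall_eq 0 fun e => by
    rw [← Ext.mk₀_id_comp e, ← r.retract, ← Ext.mk₀_comp_mk₀_assoc,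
      Subsingleton.elim ((Ext.mk₀ r.r).comp e (zero_add n)) 0, Ext.comp_zero]

lemma ext_subsingleton_of_retract_right (r : Retract N N') [Subsingleton (Ext.{w} X N' n)] :
    Subsingleton (Ext.{w} X N n) :=
  subsingleton_of_forall_eq 0 fun e => by
    rw [← Ext.comp_mk₀_id e, ← r.retract, ← Ext.mk₀_comp_mk₀, ← Ext.comp_assoc_of_second_deg_zero,
      Subsingleton.elim (e.comp (Ext.mk₀ r.i) (add_zero n)) 0, Ext.zero_comp]

lemma ext_subsingleton_of_shortExact (hS : S.ShortExact) [Subsingleton (Ext.{w} S.X₁ N n)]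
    [Subsingleton (Ext.{w} S.X₃ N n)] : Subsingleton (Ext.{w} S.X₂ N n) :=
  subsingleton_of_forall_eq 0 fun e => by
    obtain ⟨e', rfl⟩ := Ext.contravariant_sequence_exact₂ hS N e (Subsingleton.elim _ _)
    rw [Subsingleton.elim e' 0, Ext.comp_zero]

lemma exists_comp_eq_of_ext_one_subsingleton (hS : S.ShortExact)
    [Subsingleton (Ext.{w} S.X₃ N 1)] (k : S.X₁ ⟶ N) : ∃ l : S.X₂ ⟶ N, S.f ≫ l = k := by
  obtain ⟨e, he⟩ := Ext.contravariant_sequence_exact₁ hS N (Ext.mk₀ k) rfl (Subsingleton.elim _ _)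
  obtain ⟨l, rfl⟩ := (Ext.mk₀_bijective S.X₂ N).2 e
  exact ⟨l, (Ext.mk₀_bijective S.X₁ N).1 (by rw [← he, Ext.mk₀_comp_mk₀])⟩

lemma ext_one_subsingleton_iff (hS : S.ShortExact) [Projective S.X₂] :
    Subsingleton (Ext.{w} S.X₃ N 1) ↔ ∀ k : S.X₁ ⟶ N, ∃ l : S.X₂ ⟶ N, S.f ≫ l = k := by
  refine ⟨fun _ => exists_comp_eq_of_ext_one_subsingleton hS,
    fun H => subsingleton_of_forall_eq 0 fun e => ?_⟩
  obtain ⟨e', rfl⟩ := Ext.contravariant_sequence_exact₃ hS N e (Ext.eq_zero_of_projective _)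
    (n₀ := 0) rfl
  obtain ⟨k, rfl⟩ := (Ext.mk₀_bijective _ _).2 e'
  obtain ⟨l, rfl⟩ := H k
  rw [← Ext.mk₀_comp_mk₀, hS.extClass_comp_assoc]

lemma ext_subsingleton_shift_iff (hS : S.ShortExact) [Projective S.X₂] :
    Subsingleton (Ext.{w} S.X₃ N (n + 2)) ↔ Subsingleton (Ext.{w} S.X₁ N (n + 1)) := by
  constructor <;> intro h <;> refine subsingleton_of_forall_eq 0 fun e => ?_
  · obtain ⟨e', rfl⟩ := Ext.contravariant_sequence_exact₁ hS N e (n₁ := n + 2) (by lia)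
      (Subsingleton.elim _ _)
    rw [Ext.eq_zero_of_projective e', Ext.comp_zero]
  · obtain ⟨e', rfl⟩ := Ext.contravariant_sequence_exact₃ hS N e (Ext.eq_zero_of_projective _)
      (n₀ := n + 1) (by lia)
    rw [Subsingleton.elim e' 0, Ext.comp_zero]

end ExtVanishing

section Retracts

variable {C : Type u₁} [Category.{v₁} C]

/-- The complement of a retract `X` of `Y`, which is again a retract of `Y`. -/
noncomputable def retractCokernel [Preadditive C] {X Y : C} (r : Retract X Y)
    [HasCokernel r.i] : Retract (cokernel r.i) Y where
  i := cokernel.desc r.i (𝟙 Y - r.r ≫ r.i) (by simp)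
  r := cokernel.π r.i
  retract := by ext; simp

/-- The base of a pushout along a split monomorphism is a retract of the pushout. -/
noncomputable def retractPushout {X Y Z : C} (f : X ⟶ Z) (r : Retract X Y)
    [HasPushout f r.i] : Retract Z (pushout f r.i) where
  i := pushout.inl f r.i
  r := pushout.desc (𝟙 Z) (r.r ≫ f) (by simp)
  retract := pushout.inl_desc _ _ _

end Retracts

section ShortExactSequences

variable {C : Type u₁} [Category.{v₁} C] [Abelian C]

/-- The sequence `coker f → coker (f ≫ g) → coker g`, which is short exact when `g` is mono. -/
noncomputable def cokernelCompSequence {X Y Z : C} (f : X ⟶ Y) (g : Y ⟶ Z) : ShortComplex C :=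
  ShortComplex.mk (cokernel.map f (f ≫ g) (𝟙 X) g (by simp))
    (cokernel.map (f ≫ g) g f (𝟙 Z) (by simp)) (by ext; simp)

lemma cokernelCompSequence_shortExact {X Y Z : C} (f : X ⟶ Y) (g : Y ⟶ Z) [Mono g] :
    (cokernelCompSequence f g).ShortExact := by
  have h := kernelCokernelCompSequence_exact f g
  refine ShortComplex.ShortExact.mk' (h.exact 3) ?_ ?_
  · exact (h.exact 2).mono_g ((isZero_kernel_of_mono g).eq_of_src _ _)
  · dsimp [cokernelCompSequence]; infer_instance

lemma shortExact_cokernelSequence {X Y : C} (f : X ⟶ Y) [Mono f] :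
    (ShortComplex.cokernelSequence f).ShortExact :=
  .mk' (ShortComplex.cokernelSequence_exact f) ‹_› inferInstance

lemma shortExact_kernelSequence {X Y : C} (f : X ⟶ Y) [Epi f] :
    (ShortComplex.kernelSequence f).ShortExact :=
  .mk' (ShortComplex.kernelSequence_exact f) inferInstance ‹_›

lemma shortExact_cokernel {S T : ShortComplex C} (φ : S ⟶ T) (hS : S.ShortExact)
    (hT : T.ShortExact) [Mono φ.τ₃] : (cokernel φ).ShortExact := by
  let D : ShortComplex.SnakeInput C :=
    { L₀ := kernel φ
      L₁ := S
      L₂ := T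
      L₃ := cokernel φ
      v₀₁ := kernel.ι φ
      v₁₂ := φ
      v₂₃ := cokernel.π φ
      h₀ := kernelIsKernel φ
      h₃ := cokernelIsCokernel φ
      L₁_exact := hS.exact
      epi_L₁_g := hS.epi_g
      L₂_exact := hT.exact
      mono_L₂_f := hT.mono_f }
  have := hT.epi_g
  have : IsZero D.L₀.X₃ :=
    ((isZero_kernel_of_mono φ.τ₃).of_iso (PreservesKernel.iso ShortComplex.π₃ φ))
  exact .mk' D.L₃_exact (D.L₂'_exact.mono_g (this.eq_of_src _ _)) D.epi_L₃_g

lemma prop_pushout_of_shortExact (P : ObjectProperty C) [P.IsClosedUnderExtensions]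
    [P.IsClosedUnderIsomorphisms] {S : ShortComplex C} (hS : S.ShortExact) (h₃ : P S.X₃) {Y : C}
    (hY : P Y) (g : S.X₁ ⟶ Y) : P (pushout S.f g) := by
  have := hS.mono_f
  have := hS.epi_g
  have := isIso_cokernel_map_of_isPushout (IsPushout.of_hasPushout S.f g)
  let e : cokernel (pushout.inr S.f g) ≅ S.X₃ :=
    (asIso (cokernel.map _ _ _ _ (IsPushout.of_hasPushout S.f g).w)).symm ≪≫
      (cokernelIsCokernel S.f).coconePointUniqueUpToIso hS.gIsCokernel
  exact P.prop_X₂_of_shortExact (shortExact_cokernelSequence (pushout.inr S.f g)) hY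
    (P.prop_of_iso e.symm h₃)

end ShortExactSequences

section GorensteinProjective

variable {C : Type u₁} [Category.{v₁} C] [Abelian C] [HasExt.{w} C]

/-- The left orthogonal class of the projective objects: the objects `X` with
`Ext^i(X, Q) = 0` for all `i ≥ 1` and all projective `Q`. The index `n` is `i - 1`. -/
def projectiveOrthogonal : ObjectProperty C :=
  fun X => ∀ (n : ℕ) (Q : C) [Projective Q], Subsingleton (Ext.{w} X Q (n + 1))

/-- A class `𝒢` of objects orthogonal to the projectives, each of which embeds in a projective
object with cokernel in `𝒢`. Any such class consists of Gorenstein projective objects. -/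
structure IsProjectivelyCoresolved (𝒢 : ObjectProperty C) : Prop where
  le_projectiveOrthogonal : 𝒢 ≤ projectiveOrthogonal.{w}
  exists_shortExact : ∀ X, 𝒢 X → ∃ S : ShortComplex C,
    S.ShortExact ∧ Nonempty (S.X₁ ≅ X) ∧ Projective S.X₂ ∧ 𝒢 S.X₃

/-- The Gorenstein projective objects, encoded as the largest projectively coresolved class. In the
presence of enough projectives these are the syzygies of totally acyclic complexes: iterating the
embeddings into projectives gives the right half of such a complex, and orthogonality lets any
projective resolution serve as its left half. -/
def gorensteinProjective : ObjectProperty C :=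
  fun X => ∃ 𝒢 : ObjectProperty C, IsProjectivelyCoresolved.{w} 𝒢 ∧ 𝒢 X

lemma isProjectivelyCoresolved_gorensteinProjective :
    IsProjectivelyCoresolved.{w} (gorensteinProjective.{w} (C := C)) where
  le_projectiveOrthogonal := fun X ⟨_, h𝒢, hX⟩ => h𝒢.le_projectiveOrthogonal X hX
  exists_shortExact := fun X ⟨𝒢, h𝒢, hX⟩ => by
    obtain ⟨S, hS, e, hP, h₃⟩ := h𝒢.exists_shortExact X hX
    exact ⟨S, hS, e, hP, 𝒢, h𝒢, h₃⟩

lemma gorensteinProjective_le_projectiveOrthogonal :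
    gorensteinProjective.{w} (C := C) ≤ projectiveOrthogonal.{w} :=
  isProjectivelyCoresolved_gorensteinProjective.le_projectiveOrthogonal

instance : (projectiveOrthogonal.{w} (C := C)).IsStableUnderRetracts where
  of_retract r hY n Q _ := by
    have := hY n Q
    exact ext_subsingleton_of_retract r

instance : (projectiveOrthogonal.{w} (C := C)).IsClosedUnderExtensions where
  prop_X₂_of_shortExact hS h₁ h₃ n Q _ := by
    have := h₁ n Q
    have := h₃ n Q
    exact ext_subsingleton_of_shortExact hS

lemma gorensteinProjective_of_shortExact {S : ShortComplex C} (hS : S.ShortExact) {X : C}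
    (e : S.X₁ ≅ X) (hX : projectiveOrthogonal.{w} X) [Projective S.X₂]
    (h₃ : gorensteinProjective.{w} S.X₃) : gorensteinProjective.{w} X := by
  refine ⟨fun Z => Nonempty (S.X₁ ≅ Z) ∨ gorensteinProjective.{w} Z, ⟨?_, ?_⟩, .inl ⟨e⟩⟩
  · rintro Z (⟨⟨e'⟩⟩ | hZ)
    · exact projectiveOrthogonal.prop_of_iso (e.symm ≪≫ e') hX
    · exact gorensteinProjective_le_projectiveOrthogonal Z hZ
  · rintro Z (h | hZ)
    · exact ⟨S, hS, h, ‹_›, .inr h₃⟩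
    · obtain ⟨T, hT, e', hP, h₃'⟩ :=
        isProjectivelyCoresolved_gorensteinProjective.exists_shortExact Z hZ
      exact ⟨T, hT, e', hP, .inr h₃'⟩

instance : (gorensteinProjective.{w} (C := C)).IsClosedUnderIsomorphisms where
  of_iso {X Y} e hX := by
    obtain ⟨S, hS, ⟨e'⟩, _, h₃⟩ :=
      isProjectivelyCoresolved_gorensteinProjective.exists_shortExact X hX
    exact gorensteinProjective_of_shortExact hS (e' ≪≫ e)
      (projectiveOrthogonal.prop_of_iso e (gorensteinProjective_le_projectiveOrthogonal X hX)) h₃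

lemma exists_mono_of_gorensteinProjective {X : C} (hX : gorensteinProjective.{w} X) :
    ∃ (P : C) (j : X ⟶ P), Mono j ∧ Projective P ∧ gorensteinProjective.{w} (cokernel j) := by
  obtain ⟨S, hS, ⟨e⟩, hP, h₃⟩ :=
    isProjectivelyCoresolved_gorensteinProjective.exists_shortExact X hX
  have := hS.mono_f
  exact ⟨S.X₂, e.inv ≫ S.f, inferInstance, hP, gorensteinProjective.prop_of_iso
    (hS.gIsCokernel.coconePointUniqueUpToIso (cokernelIsCokernel S.f) ≪≫
      (cokernelEpiComp e.inv S.f).symm) h₃⟩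

lemma gorensteinProjective_X₁_of_shortExact {S : ShortComplex C} (hS : S.ShortExact)
    [Projective S.X₂] (h₃ : gorensteinProjective.{w} S.X₃) : gorensteinProjective.{w} S.X₁ :=
  gorensteinProjective_of_shortExact hS (Iso.refl _) (fun n Q _ =>
    (ext_subsingleton_shift_iff hS).1
      (gorensteinProjective_le_projectiveOrthogonal _ h₃ (n + 1) Q)) h₃

/-- The horseshoe map: maps `φ` and `k` out of the second and third terms of `S` assemble to a map
from `S` to the split sequence on `P` and `Q`. -/
noncomputable def biprodLift {S : ShortComplex C} {P Q : C} (φ : S.X₂ ⟶ P) (k : S.X₃ ⟶ Q) :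
    S ⟶ ShortComplex.mk (biprod.inl : P ⟶ P ⊞ Q) biprod.snd (by simp) where
  τ₁ := S.f ≫ φ
  τ₂ := biprod.lift φ (S.g ≫ k)
  τ₃ := k

instance : (gorensteinProjective.{w} (C := C)).IsClosedUnderExtensions where
  prop_X₂_of_shortExact {S} hS h₁ h₃ := by
    refine ⟨fun Y => ∃ S : ShortComplex C, S.ShortExact ∧ gorensteinProjective.{w} S.X₁ ∧
      gorensteinProjective.{w} S.X₃ ∧ Nonempty (S.X₂ ≅ Y), ⟨?_, ?_⟩, S, hS, h₁, h₃, ⟨Iso.refl _⟩⟩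
    · rintro Y ⟨S, hS, h₁, h₃, ⟨e⟩⟩
      exact projectiveOrthogonal.prop_of_iso e (projectiveOrthogonal.prop_X₂_of_shortExact hS
        (gorensteinProjective_le_projectiveOrthogonal _ h₁)
        (gorensteinProjective_le_projectiveOrthogonal _ h₃))
    · rintro Y ⟨S, hS, h₁, h₃, ⟨e⟩⟩
      obtain ⟨P, j, hj, hP, hcj⟩ := exists_mono_of_gorensteinProjective h₁
      obtain ⟨Q, k, hk, hQ, hck⟩ := exists_mono_of_gorensteinProjective h₃
      have := gorensteinProjective_le_projectiveOrthogonal _ h₃ 0 P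
      obtain ⟨φ, rfl⟩ := exists_comp_eq_of_ext_one_subsingleton hS j
      let T := ShortComplex.mk (biprod.inl : P ⟶ P ⊞ Q) biprod.snd (by simp)
      have hT : T.ShortExact := (ShortComplex.Splitting.ofHasBinaryBiproduct P Q).shortExact
      let ψ : S ⟶ T := biprodLift φ k
      have : Mono ψ.τ₁ := hj
      have : Mono ψ.τ₃ := hk
      have := hS.mono_f
      have : Mono T.f := hT.mono_f
      have : Mono ψ.τ₂ := ShortComplex.mono_τ₂_of_exact_of_mono ψ hS.exact
      exact ⟨_, shortExact_cokernelSequence ψ.τ₂, ⟨e⟩, inferInstanceAs (Projective (P ⊞ Q)),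
        cokernel ψ, shortExact_cokernel ψ hS hT,
        gorensteinProjective.prop_of_iso (PreservesCokernel.iso ShortComplex.π₁ ψ).symm hcj,
        gorensteinProjective.prop_of_iso (PreservesCokernel.iso ShortComplex.π₃ ψ).symm hck,
        ⟨PreservesCokernel.iso ShortComplex.π₂ ψ⟩⟩

instance : (gorensteinProjective.{w} (C := C)).IsStableUnderRetracts where
  of_retract {X Y} r hY := by
    refine ⟨fun X => ∃ Y, gorensteinProjective.{w} Y ∧ Nonempty (Retract X Y), ⟨?_, ?_⟩,
      Y, hY, ⟨r⟩⟩
    · rintro X ⟨Y, hY, ⟨r⟩⟩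
      exact projectiveOrthogonal.prop_of_retract r
        (gorensteinProjective_le_projectiveOrthogonal Y hY)
    · rintro X ⟨Y, hY, ⟨r⟩⟩
      obtain ⟨P, j, _, hP, hcj⟩ := exists_mono_of_gorensteinProjective hY
      let S := cokernelCompSequence r.i j
      refine ⟨_, shortExact_cokernelSequence (r.i ≫ j), ⟨Iso.refl _⟩, hP,
        pushout S.f (retractCokernel r).i, ?_, ⟨retractPushout S.f (retractCokernel r)⟩⟩
      exact prop_pushout_of_shortExact gorensteinProjective.{w}
        (cokernelCompSequence_shortExact r.i j) hcj hY _

end GorensteinProjective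

section Adjunction

lemma forall_exists_map_comp_eq_iff {C : Type u₁} [Category.{v₁} C] {D : Type u₂}
    [Category.{v₂} D] {F : C ⥤ D} {G : D ⥤ C} (adj : F ⊣ G) {X Y : C} (f : X ⟶ Y) (N : D) :
    (∀ k : F.obj X ⟶ N, ∃ l : F.obj Y ⟶ N, F.map f ≫ l = k) ↔
      ∀ k : X ⟶ G.obj N, ∃ l : Y ⟶ G.obj N, f ≫ l = k :=
  (adj.homEquiv X N).forall_congr fun k => (adj.homEquiv Y N).exists_congr fun l => by
    rw [← adj.homEquiv_naturality_left, (adj.homEquiv X N).apply_eq_iff_eq]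

variable {C : Type u₁} [Category.{v₁} C] [Abelian C] [HasExt.{w} C] [EnoughProjectives C]
  {D : Type u₂} [Category.{v₂} D] [Abelian D] [HasExt.{w'} D] {F : C ⥤ D} {G : D ⥤ C}

lemma ext_subsingleton_iff_of_adjunction (adj : F ⊣ G) [PreservesFiniteLimits F]
    [G.PreservesEpimorphisms] (X : C) (N : D) (n : ℕ) :
    Subsingleton (Ext.{w'} (F.obj X) N (n + 1)) ↔
      Subsingleton (Ext.{w} X (G.obj N) (n + 1)) := by
  have := adj.isLeftAdjoint
  have hS (X : C) := shortExact_kernelSequence (Projective.π X)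
  have hP (X : C) : Projective (ShortComplex.kernelSequence (Projective.π X)).X₂ :=
    Projective.projective_over X
  have hFP (X : C) : Projective ((ShortComplex.kernelSequence (Projective.π X)).map F).X₂ :=
    adj.map_projective _ (hP X)
  induction n generalizing X with
  | zero =>
    exact (ext_one_subsingleton_iff ((hS X).map_of_exact F)).trans
      ((forall_exists_map_comp_eq_iff adj _ N).trans (ext_one_subsingleton_iff (hS X)).symm)
  | succ n ih =>
    exact (ext_subsingleton_shift_iff ((hS X).map_of_exact F)).trans
      ((ih _).trans (ext_subsingleton_shift_iff (hS X)).symm)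

lemma gorensteinProjective_map (adj : F ⊣ G) [PreservesFiniteLimits F] [G.PreservesEpimorphisms]
    (hG : ∀ Q : D, Projective Q → Projective (G.obj Q)) {X : C}
    (hX : gorensteinProjective.{w} X) : gorensteinProjective.{w'} (F.obj X) := by
  have := adj.isLeftAdjoint
  refine ⟨fun Y => ∃ X, gorensteinProjective.{w} X ∧ Nonempty (F.obj X ≅ Y), ⟨?_, ?_⟩,
    X, hX, ⟨Iso.refl _⟩⟩
  · rintro Y ⟨X, hX, ⟨e⟩⟩
    refine projectiveOrthogonal.prop_of_iso e fun n Q hQ => ?_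
    have := hG Q hQ
    exact (ext_subsingleton_iff_of_adjunction adj X Q n).2
      (gorensteinProjective_le_projectiveOrthogonal X hX n (G.obj Q))
  · rintro Y ⟨X, hX, ⟨e⟩⟩
    obtain ⟨P, j, _, hP, hcj⟩ := exists_mono_of_gorensteinProjective hX
    exact ⟨_, (shortExact_cokernelSequence j).map_of_exact F, ⟨e⟩, adj.map_projective _ hP,
      _, hcj, ⟨Iso.refl _⟩⟩

lemma projectiveOrthogonal_of_map (adj : F ⊣ G) (adj' : G ⊣ F) [F.Faithful]
    {X : C} (hX : projectiveOrthogonal.{w'} (F.obj X)) : projectiveOrthogonal.{w} X := by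
  intro n Q _
  have := adj.isRightAdjoint
  have := adj'.isLeftAdjoint
  have := adj'.isRightAdjoint
  have := adj.map_projective Q ‹_›
  have := (ext_subsingleton_iff_of_adjunction adj X (F.obj Q) n).1 (hX n (F.obj Q))
  let r : Retract Q (G.obj (F.obj Q)) :=
    { i := Projective.factorThru (𝟙 Q) (adj'.counit.app Q)
      r := adj'.counit.app Q }
  exact ext_subsingleton_of_retract_right r

theorem gorensteinProjective_of_adjunction [EnoughProjectives D] (adj : F ⊣ G) (adj' : G ⊣ F)
    [F.Faithful] {M : C} (hM : gorensteinProjective.{w} (G.obj (F.obj M))) :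
    gorensteinProjective.{w} M := by
  have := adj.isLeftAdjoint
  have := adj.isRightAdjoint
  have := adj'.isLeftAdjoint
  have := adj'.isRightAdjoint
  have hF {X : C} (hX : gorensteinProjective.{w} X) : gorensteinProjective.{w'} (F.obj X) :=
    gorensteinProjective_map adj adj'.map_projective hX
  have hG {Y : D} (hY : gorensteinProjective.{w'} Y) : gorensteinProjective.{w} (G.obj Y) :=
    gorensteinProjective_map adj' adj.map_projective hY
  let r (X : C) : Retract (F.obj X) (F.obj (G.obj (F.obj X))) :=
    { i := F.map (adj.unit.app X)
      r := adj.counit.app (F.obj X) }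
  refine ⟨gorensteinProjective.{w'}.inverseImage F, ⟨?_, ?_⟩,
    gorensteinProjective.prop_of_retract (r M) (hF hM)⟩
  · exact fun X hX => projectiveOrthogonal_of_map adj adj'
      (gorensteinProjective_le_projectiveOrthogonal _ hX)
  · intro X hX
    obtain ⟨P, j, _, hP, hcj⟩ := exists_mono_of_gorensteinProjective (hG hX)
    refine ⟨_, shortExact_cokernelSequence (adj.unit.app X ≫ j), ⟨Iso.refl _⟩, hP,
      (gorensteinProjective.{w'}.inverseImage F).prop_X₂_of_shortExact
        (cokernelCompSequence_shortExact (adj.unit.app X) j) ?_ (hF hcj)⟩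
    exact gorensteinProjective.prop_of_iso (PreservesCokernel.iso F _).symm
      (gorensteinProjective.prop_of_retract (retractCokernel (r X)) (hF (hG hX)))

end Adjunction

/-- A Frobenius system for `ι : R →+* A`: an `R`-`R`-bimodule homomorphism `τ : A → R` together
with dual bases `x` and `y`. -/
structure FrobeniusSystem_s3 {R : Type u₁} {A : Type u₂} [Ring R] [Ring A] (ι : R →+* A)
    (κ : Type w) [Fintype κ] where
  τ : A →+ R
  x : κ → A
  y : κ → A
  map_left_mul (r : R) (a : A) : τ (ι r * a) = r * τ a
  map_mul_right (a : A) (r : R) : τ (a * ι r) = τ a * r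
  sum_left (a : A) : ∑ i, x i * ι (τ (y i * a)) = a
  sum_right (a : A) : ∑ i, ι (τ (a * x i)) * y i = a

namespace FrobeniusSystem_s3

variable {R : Type u₁} {A : Type u₂} [Ring R] [Ring A] {ι : R →+* A} {κ : Type w} [Fintype κ]
  (S : FrobeniusSystem_s3 ι κ)

open ModuleCat (coextendScalars restrictScalars)

lemma apply_eq_sum_smul {N : ModuleCat.{v₁} R} (f : (coextendScalars ι).obj N) (a : A) :
    f a = ∑ i, S.τ (a * S.x i) • f (S.y i) := by
  conv_lhs => rw [← S.sum_right a]
  exact (map_sum (ModuleCat.CoextendScalars.equiv ι N f) _ _).trans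
    (Finset.sum_congr rfl fun i _ => (ModuleCat.CoextendScalars.equiv ι N f).map_smul _ _)

/-- The underlying additive map of an element of `Hom_R(A, X)` for an `A`-module `X`. Its values
have type `X`, where `A` acts, rather than the restriction of scalars of `X`. -/
noncomputable def coextendAddMonoidHom {X : ModuleCat.{v₁} A}
    (f : (coextendScalars ι).obj ((restrictScalars ι).obj X)) : A →+ X :=
  (ModuleCat.CoextendScalars.equiv ι _ f).toAddMonoidHom

lemma sum_x_smul_apply_mul {X : ModuleCat.{v₁} A}
    (f : (coextendScalars ι).obj ((restrictScalars ι).obj X)) (a : A) :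
    ∑ i, S.x i • coextendAddMonoidHom f (S.y i * a) =
      a • ∑ i, S.x i • coextendAddMonoidHom f (S.y i) := by
  calc ∑ i, S.x i • coextendAddMonoidHom f (S.y i * a)
      = ∑ i, S.x i • ∑ j, ι (S.τ (S.y i * a * S.x j)) • coextendAddMonoidHom f (S.y j) :=
        Finset.sum_congr rfl fun i _ => congrArg (S.x i • ·) (S.apply_eq_sum_smul f (S.y i * a))
    _ = ∑ j, (∑ i, S.x i * ι (S.τ (S.y i * (a * S.x j)))) • coextendAddMonoidHom f (S.y j) := by
        simp only [Finset.smul_sum, Finset.sum_smul, smul_smul, mul_assoc]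
        exact Finset.sum_comm
    _ = a • ∑ i, S.x i • coextendAddMonoidHom f (S.y i) := by
        simp only [S.sum_left, Finset.smul_sum, smul_smul]

/-- The unit `N → Hom_R(A, N)`, `n ↦ τ(-)n`, of the adjunction `coextendRestrictScalarsAdj`. -/
noncomputable def unit (N : ModuleCat.{max v₁ u₂} R) :
    N ⟶ (restrictScalars ι).obj ((coextendScalars ι).obj N) :=
  ModuleCat.ofHom (Y := (restrictScalars ι).obj ((coextendScalars ι).obj N))
  { toFun n := (ModuleCat.CoextendScalars.equiv ι N).symm
      { toFun := fun a : A => S.τ a • n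
        map_add' := fun a b : A => by rw [← add_smul, ← map_add]; rfl
        map_smul' := fun r (a : A) => by
          rw [RingHom.id_apply, smul_smul, ← S.map_left_mul]; rfl }
    map_add' n m := ModuleCat.CoextendScalars.ext <| LinearMap.ext fun a : A =>
      smul_add (S.τ a) n m
    map_smul' r n := ModuleCat.CoextendScalars.ext <| LinearMap.ext fun a : A =>
      (smul_smul (S.τ a) r n).trans (congrArg (· • n) (S.map_mul_right a r).symm) }

/-- The counit `Hom_R(A, X) → X`, `f ↦ ∑ i, x i • f (y i)`, of the adjunction
`coextendRestrictScalarsAdj`. -/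
noncomputable def counit (X : ModuleCat.{max v₁ u₂} A) :
    (coextendScalars ι).obj ((restrictScalars ι).obj X) ⟶ X :=
  ModuleCat.ofHom (X := (coextendScalars ι).obj ((restrictScalars ι).obj X))
  { toFun f := ∑ i, S.x i • coextendAddMonoidHom f (S.y i)
    map_add' f g := by
      rw [← Finset.sum_add_distrib]
      exact Finset.sum_congr rfl fun i _ =>
        smul_add (S.x i) (coextendAddMonoidHom f (S.y i)) (coextendAddMonoidHom g (S.y i))
    map_smul' a f := S.sum_x_smul_apply_mul f a }

/-- A Frobenius system makes `Hom_R(A, -)`, which is always right adjoint to restriction of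
scalars, left adjoint to it as well. -/
noncomputable def coextendRestrictScalarsAdj :
    coextendScalars.{u₁, u₂, max v₁ u₂} ι ⊣ restrictScalars.{max v₁ u₂, u₁, u₂} ι :=
  Adjunction.mkOfUnitCounit
  { unit :=
      { app N := unit.{w, v₁} S N
        naturality := fun N N' f => by
          ext m
          exact ModuleCat.CoextendScalars.ext <| LinearMap.ext fun a : A =>
            (f.hom.map_smul (S.τ a) m).symm }
    counit :=
      { app X := counit.{w, v₁} S X
        naturality := fun X X' g => by
          ext f
          refine .trans ?_ (map_sum g.hom (fun i => S.x i • coextendAddMonoidHom f (S.y i)) _).symm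
          exact Finset.sum_congr rfl fun i _ => (g.hom.map_smul _ _).symm }
    left_triangle := by
      ext N f
      refine ModuleCat.CoextendScalars.ext <| LinearMap.ext fun a : A => ?_
      refine .trans ?_ (S.apply_eq_sum_smul f a).symm
      exact (congrArg (· a) (map_sum (ModuleCat.CoextendScalars.equiv ι N) _ _)).trans
        (LinearMap.sum_apply _ _ _)
    right_triangle := by
      ext X m
      change X at m
      calc ∑ i, S.x i • ι (S.τ (S.y i)) • m
          = (∑ i, S.x i * ι (S.τ (S.y i * 1))) • m := by
            simp only [mul_one, Finset.sum_smul, smul_smul]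
        _ = m := by rw [S.sum_left, one_smul] }

end FrobeniusSystem_s3

section TotallyAcyclicComplexes

lemma exists_int_chain {α : Type*} {r : α → α → Prop} (hl : ∀ s, ∃ t, r t s)
    (hr : ∀ s, ∃ t, r s t) (s : α) : ∃ Z : ℤ → α, Z 1 = s ∧ ∀ i, r (Z (i + 1)) (Z i) := by
  choose pred hpred using hl
  choose succ hsucc using hr
  refine ⟨fun
    | .ofNat 0 => succ s
    | .ofNat (n + 1) => pred^[n] s
    | .negSucc n => succ^[n + 2] s, rfl, ?_⟩
  rintro ((_ | n) | (_ | n))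
  · exact hsucc s
  · exact (congrArg (r · _) (Function.iterate_succ_apply' pred n s)).mpr (hpred _)
  · exact hsucc (succ s)
  · exact (congrArg (r _) (Function.iterate_succ_apply' succ (n + 2) s)).mpr (hsucc _)

lemma exists_shortExact_chain_of_gorensteinProjective {C : Type u₁} [Category.{v₁} C] [Abelian C]
    [HasExt.{w} C] [EnoughProjectives C] {X : C} (hX : gorensteinProjective.{w} X) :
    ∃ (Z P : ℤ → C) (a : ∀ i, Z (i + 1) ⟶ P i) (b : ∀ i, P i ⟶ Z i) (w : ∀ i, a i ≫ b i = 0),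
      Z 1 = X ∧ ∀ i, gorensteinProjective.{w} (Z i) ∧ Projective (P i) ∧
        (ShortComplex.mk (a i) (b i) (w i)).ShortExact := by
  obtain ⟨Z, hZ₁, hZ⟩ := exists_int_chain (α := gorensteinProjective.{w} (C := C).FullSubcategory)
    (r := fun Y Z => ∃ (P : C) (a : Y.obj ⟶ P) (b : P ⟶ Z.obj) (w : a ≫ b = 0),
      Projective P ∧ (ShortComplex.mk a b w).ShortExact)
    (fun Z => by
      have hS := shortExact_kernelSequence (Projective.π Z.obj)
      have : Projective (ShortComplex.kernelSequence (Projective.π Z.obj)).X₂ :=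
        Projective.projective_over Z.obj
      exact ⟨⟨_, gorensteinProjective_X₁_of_shortExact hS Z.property⟩, _, _, _, _, this, hS⟩)
    (fun Y => by
      obtain ⟨P, j, _, hP, hj⟩ := exists_mono_of_gorensteinProjective Y.property
      exact ⟨⟨_, hj⟩, _, _, _, _, hP, shortExact_cokernelSequence j⟩) ⟨X, hX⟩
  choose P a b w hP hS using hZ
  exact ⟨_, P, a, b, w, congrArg _ hZ₁, fun i => ⟨(Z i).property, hP i, hS i⟩⟩

lemma exists_comp_eq_of_spliced_shortExact {C : Type u₁} [Category.{v₁} C] [Abelian C]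
    [HasExt.{w} C] {P₂ Z₁ P₁ Z₀ P₀ Z Q : C} {b₂ : P₂ ⟶ Z₁} {a₁ : Z₁ ⟶ P₁} {b₁ : P₁ ⟶ Z₀}
    {a₀ : Z₀ ⟶ P₀} {b₀ : P₀ ⟶ Z} [Epi b₂] {w₁ : a₁ ≫ b₁ = 0} {w₀ : a₀ ≫ b₀ = 0}
    (h₁ : (ShortComplex.mk a₁ b₁ w₁).ShortExact) (h₀ : (ShortComplex.mk a₀ b₀ w₀).ShortExact)
    [Subsingleton (Ext.{w} Z Q 1)] (g : P₁ ⟶ Q) (hg : (b₂ ≫ a₁) ≫ g = 0) :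
    ∃ h : P₀ ⟶ Q, (b₁ ≫ a₀) ≫ h = g := by
  have := h₁.epi_g
  have hg' : a₁ ≫ g = 0 := by rwa [Category.assoc, ← comp_zero (f := b₂), cancel_epi] at hg
  obtain ⟨k, rfl⟩ := h₁.exact.desc' g hg'
  obtain ⟨h, rfl⟩ := exists_comp_eq_of_ext_one_subsingleton h₀ k
  exact ⟨h, Category.assoc _ _ _⟩

variable {R : Type u} [Ring R]

/-- The short complex `ker g → X → ker f` attached to maps `g : X → Y` and `f : Y → Z` with
`range g = ker f`, used to cut an acyclic complex into short exact pieces. -/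
def kerSequence {X Y Z : ModuleCat.{v₁} R} (g : X →ₗ[R] Y) (f : Y →ₗ[R] Z)
    (h : LinearMap.range g = LinearMap.ker f) : ShortComplex (ModuleCat.{v₁} R) :=
  .mk (ModuleCat.ofHom (LinearMap.ker g).subtype)
    (ModuleCat.ofHom (g.codRestrict (LinearMap.ker f) fun x => h ▸ LinearMap.mem_range_self g x))
    (ModuleCat.hom_ext <| LinearMap.ext fun x => Subtype.ext x.2)

lemma kerSequence_shortExact {X Y Z : ModuleCat.{v₁} R} (g : X →ₗ[R] Y) (f : Y →ₗ[R] Z)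
    (h : LinearMap.range g = LinearMap.ker f) : (kerSequence g f h).ShortExact := by
  have hker := LinearMap.ker_codRestrict (LinearMap.ker f) g fun x =>
    h ▸ LinearMap.mem_range_self g x
  have hrange : LinearMap.range (g.codRestrict (LinearMap.ker f) fun x =>
      h ▸ LinearMap.mem_range_self g x) = ⊤ := by
    rw [LinearMap.range_codRestrict, h, Submodule.comap_subtype_self]
  exact ModuleCat.shortComplex_shortExact _
    (LinearMap.exact_iff.2 (hker.trans (Submodule.range_subtype _).symm))
    (LinearMap.ker g).subtype_injective (LinearMap.range_eq_top.1 hrange)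

lemma projectiveOrthogonal_ker {P : ℤ → ModuleCat.{u} R} {f : ∀ i, P (i + 1) →ₗ[R] P i}
    (hP : ∀ i, Projective (P i)) (hf : ∀ i, LinearMap.range (f (i + 1)) = LinearMap.ker (f i))
    (hQ : ∀ Q : ModuleCat.{u} R, Projective Q → ∀ (i : ℤ) (g : P (i + 1) →ₗ[R] Q),
      g.comp (f (i + 1)) = 0 → ∃ h : P i →ₗ[R] Q, h.comp (f i) = g) (i : ℤ) :
    projectiveOrthogonal.{u} (ModuleCat.of R (LinearMap.ker (f i))) := by
  intro n Q _
  have hS i := kerSequence_shortExact (f (i + 1)) (f i) (hf i)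
  have (i : ℤ) : Projective (kerSequence (f (i + 1)) (f i) (hf i)).X₂ := hP _
  induction n generalizing i with
  | zero =>
    refine (ext_one_subsingleton_iff (hS i)).2
      fun k : ModuleCat.of R (LinearMap.ker (f (i + 1))) ⟶ Q => ?_
    let p : P (i + 1 + 1 + 1) ⟶ ModuleCat.of R (LinearMap.ker (f (i + 1))) :=
      (kerSequence (f (i + 1 + 1)) (f (i + 1)) (hf (i + 1))).g
    have hp : p.hom.comp (f (i + 1 + 1 + 1)) = 0 :=
      LinearMap.ext fun x => Subtype.ext (hf (i + 1 + 1) ▸ LinearMap.mem_range_self _ x :)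
    obtain ⟨l, hl⟩ := hQ Q ‹_› (i + 1 + 1) (k.hom.comp p.hom)
      (by rw [LinearMap.comp_assoc, hp, LinearMap.comp_zero])
    have : Epi p := (hS (i + 1)).epi_g
    exact ⟨ModuleCat.ofHom l, (cancel_epi p).1 (ModuleCat.hom_ext hl)⟩
  | succ n ih => exact (ext_subsingleton_shift_iff (hS i)).2 (ih (i + 1))

theorem gorensteinProjective_of_isGorensteinProjective {M : ModuleCat.{u} R}
    (hM : IsGorensteinProjective R M) : gorensteinProjective.{u} M := by
  obtain ⟨P, f, hP, -, hf, hQ, ⟨e⟩⟩ := hM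
  have hP' i : Projective (P i) := (IsProjective.iff_projective _).1 (hP i)
  let Z (i : ℤ) := ModuleCat.of R (LinearMap.ker (f i))
  refine ⟨fun X => ∃ i, Nonempty (Z i ≅ X), ⟨?_, ?_⟩, -1, ⟨e.symm.toModuleIso⟩⟩
  · rintro X ⟨i, ⟨e⟩⟩
    exact projectiveOrthogonal.prop_of_iso e (projectiveOrthogonal_ker hP' hf
      (fun Q hQ' => hQ Q ((IsProjective.iff_projective _).2 hQ')) i)
  · rintro X ⟨i, e⟩
    obtain ⟨j, rfl⟩ : ∃ j, i = j + 1 := ⟨i - 1, (sub_add_cancel i 1).symm⟩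
    exact ⟨_, kerSequence_shortExact (f (j + 1)) (f j) (hf j), e, hP' _, j, ⟨Iso.refl _⟩⟩

theorem isGorensteinProjective_of_gorensteinProjective {M : ModuleCat.{u} R}
    (hM : gorensteinProjective.{u} M) : IsGorensteinProjective R M := by
  obtain ⟨Z, P, a, b, w, rfl, h⟩ := exists_shortExact_chain_of_gorensteinProjective hM
  have hS i := (h i).2.2
  have hP i : Module.Projective R (P i) := (IsProjective.iff_projective _).2 (h i).2.1
  have hb i : LinearMap.range (b i).hom = ⊤ :=
    LinearMap.range_eq_top.2 (hS i).moduleCat_surjective_g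
  have ha i : LinearMap.ker (a i).hom = ⊥ := LinearMap.ker_eq_bot.2 (hS i).moduleCat_injective_f
  have hab i : LinearMap.range (a i).hom = LinearMap.ker (b i).hom :=
    (hS i).exact.moduleCat_range_eq_ker
  have hker i : LinearMap.ker (b (i + 1) ≫ a i).hom = LinearMap.range (a (i + 1)).hom :=
    (LinearMap.ker_comp_of_ker_eq_bot _ (ha i)).trans (hab (i + 1)).symm
  have hrange i : LinearMap.range (b (i + 1) ≫ a i).hom = LinearMap.range (a i).hom :=
    LinearMap.range_comp_of_range_eq_top _ (hb (i + 1))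
  have hf i : LinearMap.range (b (i + 1 + 1) ≫ a (i + 1)).hom =
      LinearMap.ker (b (i + 1) ≫ a i).hom := (hrange (i + 1)).trans (hker i).symm
  refine ⟨P, fun i => (b (i + 1) ≫ a i).hom, hP, fun i => ?_, hf, fun Q hQ i g hg => ?_, ?_⟩
  · exact LinearMap.range_le_ker_iff.1 (hf i).le
  · have := (IsProjective.iff_projective Q).1 hQ
    have := gorensteinProjective_le_projectiveOrthogonal _ (h i).1 0 Q
    have := (hS (i + 1 + 1)).epi_g
    obtain ⟨l, hl⟩ := exists_comp_eq_of_spliced_shortExact (b₂ := b (i + 1 + 1)) (hS (i + 1))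
      (hS i) (ModuleCat.ofHom g) (ModuleCat.hom_ext hg)
    exact ⟨l.hom, congrArg ModuleCat.Hom.hom hl⟩
  · -- `Z 1` is definitionally `Z (-1 + 1 + 1)`, which `a (-1 + 1)` embeds in `P (-1 + 1)`.
    exact ⟨(LinearEquiv.ofInjective (a (-1 + 1)).hom (hS (-1 + 1)).moduleCat_injective_f).trans
      (LinearEquiv.ofEq _ _ (hker (-1)).symm)⟩

end TotallyAcyclicComplexes

theorem stmt3_general {R A : Type u} [Ring R] [Ring A] {ι : R →+* A} {κ : Type w} [Fintype κ]
    (S : FrobeniusSystem_s3 ι κ) (M : Type u) [AddCommGroup M] [Module A M]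
    (hh : IsGorensteinProjective A
      (ModuleCat.of A (@CoinducedModule R A _ _ ι M _ (Module.compHom M ι)))) :
    IsGorensteinProjective A (ModuleCat.of A M) :=
  -- `CoinducedModule` is definitionally `coextendScalars` applied to the restriction of `M`.
  isGorensteinProjective_of_gorensteinProjective <|
    gorensteinProjective_of_adjunction (ModuleCat.restrictCoextendScalarsAdj.{u, u, u} ι)
      S.coextendRestrictScalarsAdj.{w, u} (gorensteinProjective_of_isGorensteinProjective hh)

section Statement

variable {R A : Type u} [Ring R] [Ring A]

theorem stmt3 (ι : R →+* A) (hF : IsFrobeniusExtension ι)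
    (M : Type u) [AddCommGroup M] [Module A M]
    (ht : IsGorensteinProjective A
      (ModuleCat.of A (@ExtendedTensor R A _ _ ι M _ (Module.compHom M ι))))
    (hh : IsGorensteinProjective A
      (ModuleCat.of A (@CoinducedModule R A _ _ ι M _ (Module.compHom M ι)))) :
    IsGorensteinProjective A (ModuleCat.of A M) := by
  obtain ⟨-, τ, n, x, y, h₁, h₂, h₃, h₄⟩ := hF
  exact stmt3_general ⟨τ, x, y, h₁, h₂, h₃, h₄⟩ M hh

end Statement
end
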